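/- Suppose (γ_k)_{k=0}^∞ is a nontrivial Legendre multiplier sequence. Then there exists an integer m ≥ 0 such that γ_k = 0 for all k < m and γ_k ≠ 0 for all k ≥ m. -/

import Mathlib

open Polynomial

/-- A real polynomial is *hyperbolic* if all of its complex roots are real
(the zero polynomial and nonzero constants are vacuously hyperbolic). -/
def Hyperbolic (p : Polynomial ℝ) : Prop :=
  ∀ z ∈ (p.map (algebraMap ℝ ℂ)).roots, z.im = 0

/-- `γ` is a multiplier sequence for the simple set `q`: the linear operator
sending `q k` to `γ k • q k` maps hyperbolic polynomials to hyperbolic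
polynomials.  (Since `q` is a simple set, every real polynomial has a unique
expansion `∑ a k • q k`, so this quantification over coefficient families
expresses exactly that property.) -/
def IsMultiplierSeqFor (q : ℕ → Polynomial ℝ) (γ : ℕ → ℝ) : Prop :=
  ∀ (n : ℕ) (a : ℕ → ℝ),
    Hyperbolic (∑ k ∈ Finset.range n, C (a k) * q k) →
    Hyperbolic (∑ k ∈ Finset.range n, C (γ k * a k) * q k)

/-- The Legendre polynomials, via Rodrigues' formula
`Le n = (1/(2^n n!)) Dⁿ[(x²-1)ⁿ]`. -/
noncomputable def legendre (n : ℕ) : Polynomial ℝ :=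
  C (1 / (2 ^ n * n.factorial : ℝ)) * derivative^[n] ((X ^ 2 - 1) ^ n)

/-- A Legendre multiplier sequence. -/
def IsLegendreMS (γ : ℕ → ℝ) : Prop := IsMultiplierSeqFor legendre γ

/-- A sequence is a *trivial* (Legendre multiplier) sequence if it is constant
or all of its nonzero terms occur in at most two consecutive positions. -/
def IsTrivialSeq (γ : ℕ → ℝ) : Prop :=
  (∃ c : ℝ, ∀ k, γ k = c) ∨ (∃ n : ℕ, ∀ k, k ≠ n → k ≠ n + 1 → γ k = 0)


theorem hyp_factor (f : ℝ[X]) (hf : Hyperbolic f) :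
    ∃ s : Multiset ℝ, f = C f.leadingCoeff * (s.map (fun r => X - C r)).prod := by
  have hs := (IsAlgClosed.splits (f.map (algebraMap ℝ ℂ))).eq_prod_roots
  refine ⟨(f.map (algebraMap ℝ ℂ)).roots.map Complex.re, ?_⟩
  apply Polynomial.map_injective (algebraMap ℝ ℂ) (algebraMap ℝ ℂ).injective
  conv_lhs => rw [hs]
  rw [Polynomial.map_mul, Polynomial.map_multiset_prod, map_C, leadingCoeff_map]
  congr 2
  rw [Multiset.map_map, Multiset.map_map]
  apply Multiset.map_congr rfl
  intro z hz
  have : ((z.re : ℝ) : ℂ) = z := by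
    apply Complex.ext <;> simp [hf z hz]
  simp [this]

theorem prod_coeffs (s : Multiset ℝ) :
    (X ^ 2 * (s.map (fun r => X - C r)).prod).coeff (s.card + 2) = 1 ∧
    (X ^ 2 * (s.map (fun r => X - C r)).prod).coeff (s.card + 1) = - s.sum ∧
    (X ^ 2 * (s.map (fun r => X - C r)).prod).coeff s.card =
      (s.sum ^ 2 - (s.map (fun r => r ^ 2)).sum) / 2 := by
  induction s using Multiset.induction with
  | empty => simp [coeff_X_pow]
  | cons r s ih =>
    obtain ⟨h1, h2, h3⟩ := ih
    have key : ∀ k, (X ^ 2 * ((r ::ₘ s).map (fun r => X - C r)).prod).coeff (k + 1) =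
        (X ^ 2 * (s.map (fun r => X - C r)).prod).coeff k
        - r * (X ^ 2 * (s.map (fun r => X - C r)).prod).coeff (k + 1) := by
      intro k
      rw [Multiset.map_cons, Multiset.prod_cons,
        show X ^ 2 * ((X - C r) * (s.map (fun r => X - C r)).prod) =
          X * (X ^ 2 * (s.map (fun r => X - C r)).prod)
          - C r * (X ^ 2 * (s.map (fun r => X - C r)).prod) by ring,
        coeff_sub, coeff_X_mul, coeff_C_mul]
    have h0 : (X ^ 2 * (s.map (fun r => X - C r)).prod).coeff (s.card + 3) = 0 := by
      rw [show s.card + 3 = (s.card + 1) + 2 by ring, coeff_X_pow_mul]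
      apply coeff_eq_zero_of_natDegree_lt
      rw [natDegree_multiset_prod_X_sub_C_eq_card]; omega
    rw [Multiset.card_cons]
    refine ⟨?_, ?_, ?_⟩
    · rw [key, h1, h0]; ring
    · rw [key, h2, h1, Multiset.sum_cons]; ring
    · rw [key, h3, h2, Multiset.sum_cons, Multiset.map_cons, Multiset.sum_cons]; ring

/-- Data for a hyperbolic polynomial of exact degree `n+2` with vanishing second coefficient. -/
theorem hyp_data (f : ℝ[X]) (hf : Hyperbolic f) (n : ℕ) (hd : f.degree < (n + 3 : ℕ))
    (h2 : f.coeff (n + 2) ≠ 0) (h1 : f.coeff (n + 1) = 0) :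
    ∃ s : Multiset ℝ, s.card = n + 2 ∧
      f = C (f.coeff (n + 2)) * (s.map (fun r => X - C r)).prod ∧
      2 * f.coeff n = - f.coeff (n + 2) * (s.map (fun r => r ^ 2)).sum := by
  obtain ⟨s, hs⟩ := hyp_factor f hf
  have hnd : f.natDegree = n + 2 := by
    apply le_antisymm
    · rw [natDegree_le_iff_coeff_eq_zero]
      intro m hm
      exact (degree_lt_iff_coeff_zero _ _).1 hd m (by omega)
    · exact le_natDegree_of_ne_zero h2
  have hl : f.leadingCoeff = f.coeff (n + 2) := by rw [leadingCoeff, hnd]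
  rw [hl] at hs
  have hc : s.card = n + 2 := by
    rw [← hnd, hs, natDegree_C_mul h2, natDegree_multiset_prod_X_sub_C_eq_card]
  refine ⟨s, hc, hs, ?_⟩
  obtain ⟨-, e1, e2⟩ := prod_coeffs s
  have hX : ∀ k, f.coeff k = f.coeff (n + 2) *
      (X ^ 2 * (s.map (fun r => X - C r)).prod).coeff (k + 2) := by
    intro k
    conv_lhs => rw [hs]
    rw [coeff_C_mul, coeff_X_pow_mul]
  rw [hc] at e1 e2
  have a1 := hX (n + 1)
  rw [h1, show n + 1 + 2 = n + 2 + 1 by ring, e1] at a1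
  have hsum : s.sum = 0 := by
    rcases mul_eq_zero.1 a1.symm with h | h
    · exact absurd h h2
    · linarith
  rw [hX n, e2, hsum]; ring

theorem sumsq_nonneg (s : Multiset ℝ) : 0 ≤ (s.map (fun r => r ^ 2)).sum := by
  apply Multiset.sum_nonneg
  intro x hx
  obtain ⟨r, -, rfl⟩ := Multiset.mem_map.1 hx
  positivity

theorem newton (f : ℝ[X]) (hf : Hyperbolic f) (n : ℕ) (hd : f.degree < (n + 3 : ℕ))
    (h1 : f.coeff (n + 1) = 0) : f.coeff (n + 2) * f.coeff n ≤ 0 := by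
  by_cases h2 : f.coeff (n + 2) = 0
  · simp [h2]
  obtain ⟨s, -, -, h⟩ := hyp_data f hf n hd h2 h1
  have := sumsq_nonneg s
  have e : 2 * (f.coeff (n + 2) * f.coeff n) =
      - (f.coeff (n + 2) ^ 2 * (s.map (fun r => r ^ 2)).sum) := by
    linear_combination f.coeff (n + 2) * h
  have := mul_nonneg (sq_nonneg (f.coeff (n + 2))) this
  linarith

theorem coeff_bound (n : ℕ) (l A : ℝ) (hl : l ≠ 0) (i : ℕ) : ∃ K : ℝ, ∀ f : ℝ[X], Hyperbolic f →
    f.degree < (n + 3 : ℕ) → f.coeff (n + 2) = l → f.coeff (n + 1) = 0 → f.coeff n = A →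
    |f.coeff i| ≤ K := by
  refine ⟨|l| * ((Real.sqrt (-2 * A / l)) ^ (n + 2 - i) * (n + 2).choose i), ?_⟩
  intro f hf hd h2 h1 h0
  obtain ⟨s, hc, hs, h⟩ := hyp_data f hf n hd (by rw [h2]; exact hl) h1
  rw [h2] at hs h
  rw [h0] at h
  have hB : (s.map (fun r => r ^ 2)).sum = -2 * A / l := by
    field_simp; linarith
  rw [hs, coeff_C_mul, abs_mul]
  apply mul_le_mul_of_nonneg_left _ (abs_nonneg l)
  have hmon : ((s.map (fun r => X - C r)).prod).Monic := monic_multiset_prod_of_monic _ _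
    (fun r _ => monic_X_sub_C r)
  have hroots : ((s.map (fun r => X - C r)).prod).roots = s := roots_multiset_prod_X_sub_C s
  have := Polynomial.coeff_le_of_roots_le (p := (s.map (fun r => X - C r)).prod)
    (f := RingHom.id ℝ) (B := Real.sqrt (-2 * A / l)) i hmon
    (by
      rw [Polynomial.map_id]
      apply Polynomial.Splits.multisetProd
      intro g hg
      obtain ⟨r, -, rfl⟩ := Multiset.mem_map.1 hg
      exact Polynomial.Splits.X_sub_C r)
    (by
      rw [Polynomial.map_id, hroots]
      intro z hz
      rw [Real.norm_eq_abs]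
      apply Real.abs_le_sqrt
      rw [← hB]
      apply Multiset.single_le_sum (s := s.map (fun r => r ^ 2)) _ _
        (Multiset.mem_map_of_mem _ hz)
      intro x hx
      obtain ⟨r, -, rfl⟩ := Multiset.mem_map.1 hx
      positivity)
  rw [Polynomial.map_id, natDegree_multiset_prod_X_sub_C_eq_card, hc, Real.norm_eq_abs] at this
  exact this

theorem hyp_mul {f g : ℝ[X]} (hf : Hyperbolic f) (hg : Hyperbolic g) : Hyperbolic (f * g) := by
  intro z hz
  by_cases h : (f * g).map (algebraMap ℝ ℂ) = 0
  · rw [h] at hz; simp at hz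
  rw [Polynomial.map_mul] at h hz
  rw [roots_mul h, Multiset.mem_add] at hz
  exact hz.elim (hf z) (hg z)

theorem hyp_add_C (r : ℝ) : Hyperbolic (X + C r) := by
  intro z hz
  rw [Polynomial.map_add, map_X, map_C, roots_X_add_C] at hz
  simp at hz
  simp [hz]

theorem hyp_X : Hyperbolic X := by simpa using hyp_add_C 0

theorem hyp_pow {f : ℝ[X]} (hf : Hyperbolic f) (n : ℕ) : Hyperbolic (f ^ n) := by
  induction n with
  | zero => intro z hz; simp at hz
  | succ n ih => rw [pow_succ]; exact hyp_mul ih hf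

/-! Coefficients of Legendre polynomials -/

theorem base_coeff_even (n i : ℕ) :
    (((X : ℝ[X]) ^ 2 - 1) ^ n).coeff (2 * i) = (-1) ^ (n - i) * (n.choose i : ℝ) := by
  have : ((X : ℝ[X]) ^ 2 - 1) ^ n = expand ℝ 2 ((X + C (-1)) ^ n) := by
    simp [sub_eq_add_neg]
  rw [this, coeff_expand_mul' (by norm_num), coeff_X_add_C_pow]

theorem base_coeff_odd (n i : ℕ) :
    (((X : ℝ[X]) ^ 2 - 1) ^ n).coeff (2 * i + 1) = 0 := by
  have : ((X : ℝ[X]) ^ 2 - 1) ^ n = expand ℝ 2 ((X + C (-1)) ^ n) := by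
    simp [sub_eq_add_neg]
  rw [this, coeff_expand (by norm_num), if_neg (by omega)]

theorem leg_coeff_even (n i m : ℕ) (h : m + n = 2 * i) :
    (legendre n).coeff m = (1 / (2 ^ n * n.factorial : ℝ)) *
      ((2 * i).descFactorial n * ((-1) ^ (n - i) * (n.choose i : ℝ))) := by
  rw [legendre, coeff_C_mul, coeff_iterate_derivative, h, base_coeff_even, nsmul_eq_mul]

theorem leg_coeff_odd (n i m : ℕ) (h : m + n = 2 * i + 1) :
    (legendre n).coeff m = 0 := by
  rw [legendre, coeff_C_mul, coeff_iterate_derivative, h, base_coeff_odd]; simp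

theorem leg_coeff_high (n m : ℕ) (h : n < m) : (legendre n).coeff m = 0 := by
  rcases Nat.even_or_odd' (m + n) with ⟨i, hi | hi⟩
  · rw [leg_coeff_even n i m hi, Nat.choose_eq_zero_of_lt (by omega)]; simp
  · exact leg_coeff_odd n i m hi

theorem leg_coeff_top (n : ℕ) : 0 < (legendre n).coeff n := by
  rw [leg_coeff_even n n n (by ring)]
  have : 0 < (2 * n).descFactorial n := Nat.descFactorial_pos.2 (by omega)
  simp only [Nat.sub_self, pow_zero, Nat.choose_self]
  positivity

theorem leg_coeff_sub2 (k : ℕ) : (legendre (k + 2)).coeff k < 0 := by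
  rw [leg_coeff_even (k + 2) (k + 1) k (by ring)]
  have h1 : 0 < (2 * (k + 1)).descFactorial (k + 2) := Nat.descFactorial_pos.2 (by omega)
  have h2 : 0 < (k + 2).choose (k + 1) := Nat.choose_pos (by omega)
  rw [show k + 2 - (k + 1) = 1 by omega]
  have : 0 < (1 / (2 ^ (k + 2) * (k + 2).factorial : ℝ)) *
      (((2 * (k + 1)).descFactorial (k + 2) : ℝ) * ((k + 2).choose (k + 1) : ℝ)) := by positivity
  linarith

theorem leg_coeff_sub4 (k : ℕ) : 0 < (legendre (k + 4)).coeff k := by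
  rw [leg_coeff_even (k + 4) (k + 2) k (by ring)]
  have h1 : 0 < (2 * (k + 2)).descFactorial (k + 4) := Nat.descFactorial_pos.2 (by omega)
  have h2 : 0 < (k + 4).choose (k + 2) := Nat.choose_pos (by omega)
  rw [show k + 4 - (k + 2) = 2 by omega]
  rw [neg_one_sq, one_mul]
  positivity

theorem leg_degree (n : ℕ) : (legendre n).degree = n := by
  apply le_antisymm
  · rw [degree_le_iff_coeff_zero]
    intro m hm
    exact leg_coeff_high n m (by exact_mod_cast hm)
  · exact le_degree_of_ne_zero (leg_coeff_top n).ne'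

noncomputable def legSeq : Polynomial.Sequence ℝ := ⟨legendre, leg_degree⟩

theorem exists_T (γ : ℕ → ℝ) (h : IsLegendreMS γ) : ∃ T : ℝ[X] →ₗ[ℝ] ℝ[X],
    (∀ f, Hyperbolic f → Hyperbolic (T f)) ∧ ∀ k, T (legendre k) = γ k • legendre k := by
  have hu : ∀ i, IsUnit (legSeq i).leadingCoeff := fun i =>
    isUnit_iff_ne_zero.2 (leadingCoeff_ne_zero.2 (legSeq.ne_zero i))
  let b := legSeq.basis hu
  have hb : ∀ k, b k = legendre k := fun k => legSeq.basis_eq_self hu k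
  have hT : ∀ k, b.constr ℝ (fun k => γ k • legendre k) (legendre k) = γ k • legendre k := by
    intro k
    rw [← hb k, Module.Basis.constr_basis, hb k]
  refine ⟨b.constr ℝ (fun k => γ k • legendre k), ?_, hT⟩
  intro f hf
  obtain ⟨n, hn⟩ : ∃ n, (b.repr f).support ⊆ Finset.range n := by
    exact Finset.exists_nat_subset_range _
  have hsum : f = ∑ k ∈ Finset.range n, C (b.repr f k) * legendre k := by
    conv_lhs => rw [← b.linearCombination_repr f]
    rw [Finsupp.linearCombination_apply, Finsupp.sum_of_support_subset _ hn]
    · simp [hb, smul_eq_C_mul]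
    · simp
  have key := h n (fun k => b.repr f k) (by rw [← hsum]; exact hf)
  have e : b.constr ℝ (fun k => γ k • legendre k) f =
      ∑ k ∈ Finset.range n, C (γ k * b.repr f k) * legendre k := by
    conv_lhs => rw [hsum]
    rw [map_sum]
    apply Finset.sum_congr rfl
    intro k _
    rw [← smul_eq_C_mul, map_smul, hT, smul_smul, smul_eq_C_mul, mul_comm (γ k)]
  rw [e]; exact key

section op
variable {γ : ℕ → ℝ} {T : ℝ[X] →ₗ[ℝ] ℝ[X]}

theorem T_deg (hL : ∀ k, T (legendre k) = γ k • legendre k) (n : ℕ) :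
    ∀ f : ℝ[X], f.degree < n → (T f).degree < n := by
  induction n with
  | zero =>
    intro f hf
    have : f = 0 := by simpa using hf
    simp [this]
  | succ n ih =>
    intro f hf
    have hl := (leg_coeff_top n).ne'
    set c := f.coeff n / (legendre n).coeff n with hc
    have hg : (f - c • legendre n).degree < n := by
      rw [degree_lt_iff_coeff_zero] at hf ⊢
      intro m hm
      rcases hm.eq_or_lt with rfl | hm
      · rw [coeff_sub, coeff_smul, smul_eq_mul, hc]; field_simp; ring
      · rw [coeff_sub, coeff_smul, leg_coeff_high n m hm, hf m hm]; simp
    have h1 := ih _ hg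
    have : T f = T (f - c • legendre n) + (c * γ n) • legendre n := by
      rw [map_sub, map_smul, hL, smul_smul]; ring
    rw [this]
    rw [degree_lt_iff_coeff_zero] at h1 ⊢
    intro m hm
    rw [coeff_add, coeff_smul, h1 m (by omega), leg_coeff_high n m (by omega)]; simp

theorem T_coeff_zero (hL : ∀ k, T (legendre k) = γ k • legendre k) (n : ℕ)
    (f : ℝ[X]) (hf : ∀ m, n ≤ m → f.coeff m = 0) (m : ℕ) (hm : n ≤ m) : (T f).coeff m = 0 := by
  have := T_deg hL n f ((degree_lt_iff_coeff_zero _ _).2 hf)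
  exact (degree_lt_iff_coeff_zero _ _).1 this m hm

theorem T_top (hL : ∀ k, T (legendre k) = γ k • legendre k) (n : ℕ) :
    (T (X ^ n)).coeff n = γ n := by
  have hl := (leg_coeff_top n).ne'
  have := T_coeff_zero hL n (legendre n - (legendre n).coeff n • X ^ n) (by
    intro m hm
    rcases hm.eq_or_lt with rfl | hm
    · simp
    · simp [leg_coeff_high n m hm, coeff_X_pow, hm.ne']) n le_rfl
  rw [map_sub, map_smul, hL, coeff_sub, coeff_smul, coeff_smul, smul_eq_mul, smul_eq_mul] at this
  apply mul_left_cancel₀ hl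
  linarith

theorem T_sub (hL : ∀ k, T (legendre k) = γ k • legendre k) (n : ℕ) :
    (T (X ^ (n + 1))).coeff n = 0 := by
  have hl := (leg_coeff_top (n + 1)).ne'
  have h0 : (legendre (n + 1)).coeff n = 0 := leg_coeff_odd (n + 1) n n (by ring)
  have := T_coeff_zero hL n (legendre (n + 1) - (legendre (n + 1)).coeff (n + 1) • X ^ (n + 1)) (by
    intro m hm
    rcases hm.eq_or_lt with rfl | hm
    · simp [h0, coeff_X_pow]
    rcases (Nat.succ_le_of_lt hm).eq_or_lt with rfl | hm
    · simp
    · have : n + 1 < m := hm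
      simp [leg_coeff_high (n + 1) m hm, coeff_X_pow, this.ne']) n le_rfl
  rw [map_sub, map_smul, hL, coeff_sub, coeff_smul, coeff_smul, smul_eq_mul, smul_eq_mul, h0] at this
  apply mul_left_cancel₀ hl
  linarith

theorem T_high (hL : ∀ k, T (legendre k) = γ k • legendre k) (n m : ℕ) (h : n < m) :
    (T (X ^ n)).coeff m = 0 := by
  apply T_coeff_zero hL (n + 1) _ _ m h
  intro k hk
  rw [coeff_X_pow, if_neg (by omega)]

theorem T_main (hL : ∀ k, T (legendre k) = γ k • legendre k) (k : ℕ) (f : ℝ[X])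
    (hf : f.degree < ((k + 3 : ℕ) : WithBot ℕ)) :
    (T f).coeff (k + 2) = γ (k + 2) * f.coeff (k + 2) ∧
    (T f).coeff (k + 1) = γ (k + 1) * f.coeff (k + 1) ∧
    (T f).coeff k = γ k * f.coeff k + (T (X ^ (k + 2))).coeff k * f.coeff (k + 2) := by
  set R := f - (f.coeff (k + 2) • X ^ (k + 2) + f.coeff (k + 1) • X ^ (k + 1) + f.coeff k • X ^ k)
    with hR
  have hRz : ∀ m, k ≤ m → R.coeff m = 0 := by
    intro m hm
    rw [hR]
    simp only [coeff_sub, coeff_add, coeff_smul, coeff_X_pow, smul_eq_mul]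
    by_cases h1 : m = k
    · subst h1; simp
    by_cases h2 : m = k + 1
    · subst h2; simp
    by_cases h3 : m = k + 2
    · subst h3; simp
    rw [(degree_lt_iff_coeff_zero _ _).1 hf m (by omega)]
    simp [h1, h2, h3]
  have hTf : T f = T R + (f.coeff (k + 2) • T (X ^ (k + 2)) + f.coeff (k + 1) • T (X ^ (k + 1))
      + f.coeff k • T (X ^ k)) := by
    rw [← map_smul, ← map_smul, ← map_smul, ← map_add, ← map_add, ← map_add, hR]
    congr 1; ring
  rw [hTf]
  have z := T_coeff_zero hL k R hRz
  simp only [coeff_add, coeff_smul, smul_eq_mul]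
  rw [z _ le_rfl, z (k + 1) (by omega), z (k + 2) (by omega), T_top hL, T_top hL, T_top hL,
    T_sub hL, T_high hL k (k + 1) (by omega), T_high hL k (k + 2) (by omega),
    T_sub hL, T_high hL (k + 1) (k + 2) (by omega)]
  refine ⟨by ring, by ring, by ring⟩

theorem T_newton (hT : ∀ f, Hyperbolic f → Hyperbolic (T f))
    (hL : ∀ k, T (legendre k) = γ k • legendre k) (k : ℕ) (f : ℝ[X]) (hh : Hyperbolic f)
    (hf : f.degree < ((k + 3 : ℕ) : WithBot ℕ)) (h1 : γ (k + 1) * f.coeff (k + 1) = 0) :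
    γ (k + 2) * f.coeff (k + 2) *
      (γ k * f.coeff k + (T (X ^ (k + 2))).coeff k * f.coeff (k + 2)) ≤ 0 := by
  obtain ⟨a, b, c⟩ := T_main hL k f hf
  rw [← a, ← c]
  exact newton _ (hT f hh) k (T_deg hL _ f hf) (by rw [b, h1])

theorem quad_coeffs (k : ℕ) (a b : ℝ) :
    ((X : ℝ[X]) ^ k * ((X + C a) * (X + C b))).degree < ((k + 3 : ℕ) : WithBot ℕ) ∧
    ((X : ℝ[X]) ^ k * ((X + C a) * (X + C b))).coeff (k + 2) = 1 ∧
    ((X : ℝ[X]) ^ k * ((X + C a) * (X + C b))).coeff (k + 1) = a + b ∧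
    ((X : ℝ[X]) ^ k * ((X + C a) * (X + C b))).coeff k = a * b := by
  have e : (X : ℝ[X]) ^ k * ((X + C a) * (X + C b)) =
      X ^ (k + 2) + C (a + b) * X ^ (k + 1) + C (a * b) * X ^ k := by
    rw [C_add, C_mul]; ring
  rw [e]
  refine ⟨?_, ?_, ?_, ?_⟩
  · rw [degree_lt_iff_coeff_zero]
    intro m hm
    simp only [coeff_add, coeff_C_mul, coeff_X_pow]
    rw [if_neg (by omega), if_neg (by omega), if_neg (by omega)]; ring
  all_goals (simp only [coeff_add, coeff_C_mul, coeff_X_pow]; simp)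

theorem lin_le (A B : ℝ) (h : ∀ s : ℝ, 0 < s → A + s ^ 2 * B ≤ 0) : B ≤ 0 := by
  by_contra hB
  push Not at hB
  have h1 := h (|A| / B + 1) (by positivity)
  have h2 : (|A| / B + 1) ^ 2 * B ≥ |A| + B := by
    have : 0 ≤ |A| / B := by positivity
    have e : |A| / B * B = |A| := by field_simp
    nlinarith [mul_nonneg this this, mul_nonneg (mul_nonneg this this) hB.le]
  linarith [neg_abs_le A]

theorem step_nonneg (hT : ∀ f, Hyperbolic f → Hyperbolic (T f))
    (hL : ∀ k, T (legendre k) = γ k • legendre k) (k : ℕ) : 0 ≤ γ (k + 2) * γ k := by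
  have := lin_le (γ (k + 2) * (T (X ^ (k + 2))).coeff k) (-(γ (k + 2) * γ k)) (by
    intro s _
    obtain ⟨h0, h1, h2, h3⟩ := quad_coeffs k s (-s)
    have := T_newton hT hL k _ (hyp_mul (hyp_pow hyp_X k) (hyp_mul (hyp_add_C s) (hyp_add_C (-s))))
      h0 (by rw [h2]; ring)
    rw [h1, h3] at this
    linarith)
  linarith

theorem step_nonpos (hT : ∀ f, Hyperbolic f → Hyperbolic (T f))
    (hL : ∀ k, T (legendre k) = γ k • legendre k) (k : ℕ) (hk : γ (k + 1) = 0) :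
    γ (k + 2) * γ k ≤ 0 := by
  exact lin_le (γ (k + 2) * (T (X ^ (k + 2))).coeff k) (γ (k + 2) * γ k) (by
    intro s _
    obtain ⟨h0, h1, h2, h3⟩ := quad_coeffs k s s
    have := T_newton hT hL k _ (hyp_mul (hyp_pow hyp_X k) (hyp_mul (hyp_add_C s) (hyp_add_C s)))
      h0 (by rw [hk]; ring)
    rw [h1, h3] at this
    linarith)

theorem step_gap (hT : ∀ f, Hyperbolic f → Hyperbolic (T f))
    (hL : ∀ k, T (legendre k) = γ k • legendre k) (k : ℕ) (h2 : γ (k + 2) ≠ 0)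
    (h1 : γ (k + 1) = 0) (h0 : γ k = 0) (j : ℕ) (hj : j < k) : γ j = 0 := by
  by_contra hne
  obtain ⟨d, hd⟩ : ∃ d, k + 2 = j + d := ⟨k + 2 - j, by omega⟩
  have hd0 : 0 < d := by omega
  obtain ⟨K, hK⟩ := coeff_bound k (γ (k + 2)) ((T (X ^ (k + 2))).coeff k) h2 j
  set Q : ℝ[X] := ∑ i ∈ Finset.range (d + 1),
    C ((d.choose i : ℝ) * (T (X ^ (i + j))).coeff j) * X ^ (d - i) with hQ
  have hQd : Q.coeff d = γ j := by
    rw [hQ, finsetSum_coeff, Finset.sum_eq_single 0]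
    · rw [coeff_C_mul, coeff_X_pow]
      simp [T_top hL]
    · intro i hi hi0
      rw [coeff_C_mul, coeff_X_pow, if_neg (by have := Finset.mem_range.1 hi; omega), mul_zero]
    · simp
  have hdeg : 0 < Q.degree := by
    have h1 : (d : WithBot ℕ) ≤ Q.degree := le_degree_of_ne_zero (by rw [hQd]; exact hne)
    exact lt_of_lt_of_le (by exact_mod_cast hd0) h1
  have hbound : ∀ s : ℝ, |Q.eval s| ≤ K := by
    intro s
    have hev : (T (X ^ j * (X + C s) ^ d)).coeff j = Q.eval s := by
      have e : (X : ℝ[X]) ^ j * (X + C s) ^ d =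
          ∑ i ∈ Finset.range (d + 1), ((d.choose i : ℝ) * s ^ (d - i)) • X ^ (i + j) := by
        rw [add_pow, Finset.mul_sum]
        apply Finset.sum_congr rfl
        intro i _
        rw [smul_eq_C_mul, C_mul, C_pow, C_eq_natCast]
        ring
      rw [e, map_sum, finsetSum_coeff, hQ, eval_finsetSum]
      apply Finset.sum_congr rfl
      intro i _
      rw [map_smul, coeff_smul, smul_eq_mul]
      simp only [eval_mul, eval_C, eval_pow, eval_X]
      ring
    have hc : ∀ i, ((X : ℝ[X]) ^ j * (X + C s) ^ d).coeff (i + j) = s ^ (d - i) * (d.choose i : ℝ) := by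
      intro i
      rw [coeff_X_pow_mul, coeff_X_add_C_pow]
    have hfd : ((X : ℝ[X]) ^ j * (X + C s) ^ d).degree < ((k + 3 : ℕ) : WithBot ℕ) := by
      rw [degree_lt_iff_coeff_zero]
      intro m hm
      obtain ⟨i, rfl⟩ : ∃ i, m = i + j := ⟨m - j, by omega⟩
      rw [hc, Nat.choose_eq_zero_of_lt (by omega)]; simp
    have hft : ((X : ℝ[X]) ^ j * (X + C s) ^ d).coeff (k + 2) = 1 := by
      rw [hd, add_comm j d, hc]; simp
    obtain ⟨a, b, c⟩ := T_main hL k _ hfd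
    rw [← hev]
    apply hK _ (hT _ (hyp_mul (hyp_pow hyp_X j) (hyp_pow (hyp_add_C s) d))) (T_deg hL _ _ hfd)
    · rw [a, hft, mul_one]
    · rw [b, h1, zero_mul]
    · rw [c, h0, hft]; ring
  have ht := Polynomial.abs_tendsto_atTop Q hdeg
  obtain ⟨s, hs⟩ := (ht.eventually (Filter.eventually_gt_atTop K)).exists
  exact absurd (hbound s) (not_le.2 hs)

theorem step_end (hT : ∀ f, Hyperbolic f → Hyperbolic (T f))
    (hL : ∀ k, T (legendre k) = γ k • legendre k) (k : ℕ) (h4 : γ (k + 4) = 0) :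
    γ (k + 2) * γ k ≤ 0 := by
  set l := (legendre (k + 4)).coeff (k + 4) with hl
  set u := (legendre (k + 4)).coeff (k + 2) with hu
  set v := (legendre (k + 4)).coeff k with hv
  have hl0 : 0 < l := leg_coeff_top (k + 4)
  have hu0 : u < 0 := leg_coeff_sub2 (k + 2)
  have hv0 : 0 < v := leg_coeff_sub4 k
  have key : γ (k + 2) * γ k * v ≤ 0 := by
    apply lin_le (γ (k + 2) * (T (X ^ (k + 2))).coeff k)
    intro s hs
    -- delta is the small leading coefficient
    obtain ⟨δ, hδ, hδs⟩ : ∃ δ : ℝ, 0 < δ ∧ s ^ 2 * δ = 1 :=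
      ⟨1 / s ^ 2, by positivity, by field_simp⟩
    have hc0 : 0 ≤ (δ - u) / l := div_nonneg (by linarith) hl0.le
    set c := Real.sqrt ((δ - u) / l) with hc
    have hcc : l * (c * c) = δ - u := by
      rw [hc, Real.mul_self_sqrt hc0]; field_simp
    set p : ℝ[X] := X ^ (k + 2) * ((X + C c) * (X + C (-c))) with hp
    obtain ⟨q0, q1, q2, q3⟩ := quad_coeffs (k + 2) c (-c)
    rw [← hp] at q0 q1 q2 q3
    have hph : Hyperbolic p :=
      hyp_mul (hyp_pow hyp_X _) (hyp_mul (hyp_add_C c) (hyp_add_C (-c)))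
    have hCh : Hyperbolic (C (-l) : ℝ[X]) := by
      intro z hz
      rw [map_C, roots_C] at hz
      simp at hz
    have plow : ∀ m, m < k + 2 → p.coeff m = 0 := by
      intro m hm
      rw [hp, coeff_X_pow_mul', if_neg (by omega)]
    set g : ℝ[X] := legendre (k + 4) + C (-l) * p with hg
    have hTg : T g = T (C (-l) * p) := by
      rw [hg, map_add, hL, h4, zero_smul, zero_add]
    have gc : ∀ m, g.coeff m = (legendre (k + 4)).coeff m + (-l) * p.coeff m := by
      intro m; rw [hg, coeff_add, coeff_C_mul]
    have g2 : g.coeff (k + 2) = δ := by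
      rw [gc, q3, ← hu]; linarith
    have g1 : g.coeff (k + 1) = 0 := by
      rw [gc, plow _ (by omega), leg_coeff_odd (k + 4) (k + 2) (k + 1) (by ring)]; ring
    have g0 : g.coeff k = v := by
      rw [gc, plow _ (by omega), ← hv]; ring
    have gd : g.degree < ((k + 3 : ℕ) : WithBot ℕ) := by
      rw [degree_lt_iff_coeff_zero]
      intro m hm
      rw [gc]
      rcases (by omega : m = k + 3 ∨ m = k + 4 ∨ k + 5 ≤ m) with rfl | rfl | hm
      · rw [q2, leg_coeff_odd (k + 4) (k + 3) (k + 3) (by ring)]; ring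
      · rw [q1]; ring
      · rw [leg_coeff_high _ _ (by omega), (degree_lt_iff_coeff_zero _ _).1 q0 m hm]; ring
    obtain ⟨a, b, e⟩ := T_main hL k g gd
    have hN := newton (T g) (by rw [hTg]; exact hT _ (hyp_mul hCh hph)) k (T_deg hL _ g gd)
      (by rw [b, g1, mul_zero])
    rw [a, e, g2, g0] at hN
    have hs4 : 0 ≤ (s ^ 2) ^ 2 := by positivity
    have hfin := mul_nonpos_of_nonneg_of_nonpos hs4 hN
    have e2 : (s ^ 2) ^ 2 * (γ (k + 2) * δ * (γ k * v + (T (X ^ (k + 2))).coeff k * δ)) =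
        γ (k + 2) * (T (X ^ (k + 2))).coeff k * (s ^ 2 * δ) ^ 2
        + s ^ 2 * (γ (k + 2) * γ k * v) * (s ^ 2 * δ) := by ring
    rw [e2, hδs] at hfin
    linarith
  by_contra hcon
  push Not at hcon
  have := mul_pos hcon hv0
  linarith

end op

theorem stmt_7 (γ : ℕ → ℝ) (h : IsLegendreMS γ) (hnt : ¬ IsTrivialSeq γ) :
    ∃ m : ℕ, (∀ k, k < m → γ k = 0) ∧ (∀ k, m ≤ k → γ k ≠ 0) := by
  obtain ⟨T, hT, hL⟩ := exists_T γ h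
  have hgap : ∀ n, γ (n + 1) ≠ 0 → γ n = 0 → ∀ j, j < n + 1 → γ j = 0 := by
    intro n hn h0 j hj
    rcases n with _ | k
    · obtain rfl : j = 0 := by omega
      exact h0
    have hk : γ k = 0 := by
      have := le_antisymm (step_nonpos hT hL k h0) (step_nonneg hT hL k)
      exact (mul_eq_zero.1 this).resolve_left hn
    rcases (by omega : j = k + 1 ∨ j = k ∨ j < k) with rfl | rfl | hlt
    · exact h0
    · exact hk
    · exact step_gap hT hL k hn h0 hk j hlt
  by_cases hz : ∀ k, γ k = 0
  · exact absurd (Or.inl ⟨0, hz⟩) hnt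
  push Not at hz
  classical
  set m := Nat.find hz with hm
  have hm0 : γ m ≠ 0 := Nat.find_spec hz
  have hlt : ∀ k, k < m → γ k = 0 := fun k hk => by simpa using Nat.find_min hz hk
  refine ⟨m, hlt, ?_⟩
  intro k hk hk0
  have htail : ∀ l, m < l → γ l = 0 → ∀ i, γ (l + i) = 0 := by
    intro l hl hl0 i
    induction i with
    | zero => exact hl0
    | succ i ih =>
      by_contra hne
      exact hm0 (hgap (l + i) hne ih m (by omega))
  have hmk : m < k := lt_of_le_of_ne hk (fun e => hm0 (e ▸ hk0))
  -- last index with nonzero value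
  have hex : ∃ l, m < l ∧ γ l = 0 := ⟨k, hmk, hk0⟩
  set l := Nat.find hex with hl
  obtain ⟨hl1, hl0⟩ : m < l ∧ γ l = 0 := Nat.find_spec hex
  have hlmin : ∀ i, m ≤ i → i < l → γ i ≠ 0 := by
    intro i hi hil h0
    rcases hi.eq_or_lt with rfl | hi
    · exact hm0 h0
    · exact Nat.find_min hex hil ⟨hi, h0⟩
  by_cases hle : l ≤ m + 2
  · apply hnt
    right
    refine ⟨m, fun i h1 h2 => ?_⟩
    by_cases hi : i < m
    · exact hlt i hi
    · have := htail l hl1 hl0 (i - l)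
      rwa [show l + (i - l) = i by omega] at this
  · obtain ⟨q, hq⟩ : ∃ q, l = q + 3 := ⟨l - 3, by omega⟩
    have a := hlmin q (by omega) (by omega)
    have b := hlmin (q + 2) (by omega) (by omega)
    have c := htail l hl1 hl0 1
    rw [hq] at c
    have := le_antisymm (step_end hT hL q c) (step_nonneg hT hL q)
    rcases mul_eq_zero.1 this with h | h
    · exact b h
    · exact a h
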